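/- Let K, T ⊂ ℝ^{2n} be convex bodies, x, y ∈ ℝ^{2n}, and 0 ≤ λ ≤ 1. If K ∩ (x+T) and K ∩ (y+T) have nonempty interiors, then λ·c(K ∩ (x+T))^{1/2} + (1−λ)·c(K ∩ (y+T))^{1/2} ≤ c(K ∩ (λx + (1−λ)y + T))^{1/2}. -/

import Mathlib

/-!
The support function, and hence the functional minimized by `√c`, is monotone, Minkowski additive
and positively homogeneous in the body. An infimum of sums is at least the sum of the infima, so
`√c` satisfies the Brunn–Minkowski inequality `√c(A) + √c(B) ≤ √c(A + B)`. By convexity,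
`a (K ∩ (x + T)) + b (K ∩ (y + T)) ⊆ K ∩ (a x + b y + T)` whenever `a, b ≥ 0` and `a + b = 1`, and
the concavity follows from Brunn–Minkowski, homogeneity and monotonicity.
-/

open MeasureTheory Real Set Filter intervalIntegral Metric
open scoped InnerProductSpace Topology Pointwise

noncomputable section

/-- The phase space `ℝ^{2n}`. -/
abbrev E (n : ℕ) := EuclideanSpace ℝ (Fin (2 * n))

/-- The standard complex structure `J` on `ℝ^{2n}`, given in coordinates
`(x₁,y₁,…,xₙ,yₙ)` by `J(x₁,y₁,…,xₙ,yₙ) = (−y₁,x₁,…,−yₙ,xₙ)`. -/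
def Jmap (n : ℕ) (v : E n) : E n := WithLp.toLp 2 fun i =>
  if _h : i.val % 2 = 0 then -v ⟨i.val + 1, by have := i.isLt; omega⟩
  else v ⟨i.val - 1, by have := i.isLt; omega⟩

/-- The support function `h_K(u) = sup_{x ∈ K} ⟨x, u⟩`. -/
def suppFn (n : ℕ) (K : Set (E n)) (u : E n) : ℝ :=
  sSup ((fun x => ⟪x, u⟫_ℝ) '' K)

/-- A convex body: a compact convex set with nonempty interior. -/
def IsConvexBody (n : ℕ) (K : Set (E n)) : Prop :=
  IsCompact K ∧ Convex ℝ K ∧ (interior K).Nonempty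

/-- Membership in the loop space `𝓔_p`: the pair `(z, dz)` represents an absolutely
continuous `2π`-periodic loop `z` with derivative `dz ∈ L^p([0,2π])`, mean zero and
normalized action `(1/2)∫₀^{2π} ⟨J z, ż⟩ = 1`. -/
def InE (n : ℕ) (p : ℝ) (z dz : ℝ → E n) : Prop :=
  Function.Periodic z (2 * π) ∧
  (∀ a b : ℝ, IntervalIntegrable dz volume a b) ∧
  (∀ t, z t = z 0 + ∫ s in (0:ℝ)..t, dz s) ∧
  MemLp dz (ENNReal.ofReal p) (volume.restrict (Set.Ioc (0:ℝ) (2 * π))) ∧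
  (∫ t in (0:ℝ)..(2 * π), z t) = 0 ∧
  (1 / 2) * ∫ t in (0:ℝ)..(2 * π), ⟪Jmap n (z t), dz t⟫_ℝ = 1

/-- The (Ekeland–Hofer–Zehnder) capacity of a convex body,
`c(S) = (π · inf_{z ∈ 𝓔₂} (1/2π) ∫₀^{2π} h_S(ż(t)) dt)²`. -/
def capacity (n : ℕ) (S : Set (E n)) : ℝ :=
  (π * sInf { r : ℝ | ∃ z dz : ℝ → E n, InE n 2 z dz ∧
      r = (1 / (2 * π)) * ∫ t in (0:ℝ)..(2 * π), suppFn n S (dz t) }) ^ 2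

/-- The action `𝒜(γ) = (1/2) ∫₀^{T₀} ⟨−Jγ̇(t), γ(t)⟩ dt` of a `T₀`-periodic curve. -/
def action (n : ℕ) (γ : ℝ → E n) (T₀ : ℝ) : ℝ :=
  (1 / 2) * ∫ t in (0:ℝ)..T₀, ⟪-Jmap n (deriv γ t), γ t⟫_ℝ

/-- A closed characteristic on `∂K`: a nonconstant `T₀`-periodic `C¹` curve lying on
`∂K` satisfying `γ̇ = d·J∇F(γ)` for some `d > 0`, where `F = ‖·‖_K²`. -/
def IsClosedCharacteristic (n : ℕ) (K : Set (E n)) (γ : ℝ → E n) (T₀ : ℝ) : Prop :=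
  0 < T₀ ∧ Function.Periodic γ T₀ ∧ ContDiff ℝ 1 γ ∧ (∃ s t, γ s ≠ γ t) ∧
  (∀ t, γ t ∈ frontier K) ∧
  ∃ d : ℝ, 0 < d ∧ ∀ t, deriv γ t = d • Jmap n (gradient (fun x => gauge K x ^ 2) (γ t))

/-- A capacity carrier of `K`: a closed characteristic on `∂K` of minimal action. -/
def IsCapacityCarrier (n : ℕ) (K : Set (E n)) (γ : ℝ → E n) (T₀ : ℝ) : Prop :=
  IsClosedCharacteristic n K γ T₀ ∧
  ∀ γ' T₀', IsClosedCharacteristic n K γ' T₀' → action n γ T₀ ≤ action n γ' T₀'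

/-- The minimal action of a closed characteristic on `∂K`. -/
def minAction (n : ℕ) (K : Set (E n)) : ℝ :=
  sInf { a : ℝ | ∃ γ T₀, IsClosedCharacteristic n K γ T₀ ∧ a = action n γ T₀ }

/-- `K` has smooth boundary: its gauge function is `C¹` away from the origin. -/
def HasSmoothBoundary (n : ℕ) (K : Set (E n)) : Prop :=
  ContDiffOn ℝ 1 (gauge K) {(0 : E n)}ᶜ

/-- The `p`-sum `K +ₚ T` of Firey: the convex body with support function
`(h_K^p + h_T^p)^{1/p}`. -/
def pSum (n : ℕ) (p : ℝ) (K T : Set (E n)) : Set (E n) :=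
  { x | ∀ u, ⟪x, u⟫_ℝ ≤ (suppFn n K u ^ p + suppFn n T u ^ p) ^ (1 / p) }

/-- The polar body `T° = {x : ⟨x,y⟩ ≤ 1 for all y ∈ T}`. -/
def polarBody (n : ℕ) (T : Set (E n)) : Set (E n) :=
  { x | ∀ y ∈ T, ⟪x, y⟫_ℝ ≤ 1 }

/-- The length `∫₀^{T₀} ‖γ̇(t)‖_B dt` of a curve measured with the gauge of `B`. -/
def lengthIn (n : ℕ) (B : Set (E n)) (γ : ℝ → E n) (T₀ : ℝ) : ℝ :=
  ∫ t in (0:ℝ)..T₀, gauge B (deriv γ t)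

/-- Critical point of the functional `I_p(z) = ∫₀^{2π} h_K^p(ż(t)) dt` on `𝓔_p`. -/
def IsCriticalPoint (n : ℕ) (p : ℝ) (K : Set (E n)) (z dz : ℝ → E n) : Prop :=
  ∀ ξ dξ : ℝ → E n,
    Function.Periodic ξ (2 * π) →
    (∀ a b : ℝ, IntervalIntegrable dξ volume a b) →
    (∀ t, ξ t = ξ 0 + ∫ s in (0:ℝ)..t, dξ s) →
    MemLp dξ (ENNReal.ofReal p) (volume.restrict (Set.Ioc (0:ℝ) (2 * π))) →
    (∫ t in (0:ℝ)..(2 * π), ξ t) = 0 →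
    (∫ t in (0:ℝ)..(2 * π), ⟪ξ t, Jmap n (dz t)⟫_ℝ) = 0 →
    (∫ t in (0:ℝ)..(2 * π), ⟪gradient (fun u => suppFn n K u ^ p) (dz t), dξ t⟫_ℝ) = 0

/-- The rotation-invariant probability measure on the unit sphere of `ℝ^{2n}`. -/
def sphereMeasure (n : ℕ) : Measure (sphere (0 : E n) 1) :=
  ((volume : Measure (E n)).toSphere Set.univ)⁻¹ • (volume : Measure (E n)).toSphere

/-- The mean width parameter `M*(K) = ∫_{S^{2n-1}} h_K dσ`. -/
def meanWidth (n : ℕ) (K : Set (E n)) : ℝ :=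
  ∫ x : sphere (0 : E n) 1, suppFn n K (x : E n) ∂(sphereMeasure n)

section Pointwise

variable {𝕜 F : Type*} [Semiring 𝕜] [PartialOrder 𝕜] [AddCommGroup F] [Module 𝕜 F] {K T : Set F}
  {a b : 𝕜}

lemma smul_vadd_add_smul_vadd_subset (hT : Convex 𝕜 T) (ha : 0 ≤ a) (hb : 0 ≤ b) (hab : a + b = 1)
    (x y : F) : a • (x +ᵥ T) + b • (y +ᵥ T) ⊆ (a • x + b • y) +ᵥ T := by
  rintro _ ⟨_, ⟨_, ⟨t, ht, rfl⟩, rfl⟩, _, ⟨_, ⟨s, hs, rfl⟩, rfl⟩, rfl⟩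
  refine ⟨a • t + b • s, hT ht hs ha hb hab, ?_⟩
  simp only [vadd_eq_add, smul_add]
  abel

lemma smul_inter_vadd_add_smul_inter_vadd_subset (hK : Convex 𝕜 K) (hT : Convex 𝕜 T)
    (ha : 0 ≤ a) (hb : 0 ≤ b) (hab : a + b = 1) (x y : F) :
    a • (K ∩ (x +ᵥ T)) + b • (K ∩ (y +ᵥ T)) ⊆ K ∩ ((a • x + b • y) +ᵥ T) :=
  subset_inter
    ((add_subset_add (smul_set_mono inter_subset_left) (smul_set_mono inter_subset_left)).trans
      (hK.set_combo_subset ha hb hab))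
    ((add_subset_add (smul_set_mono inter_subset_right) (smul_set_mono inter_subset_right)).trans
      (smul_vadd_add_smul_vadd_subset hT ha hb hab x y))

lemma convex_setOf_inter_vadd_nonempty (hK : Convex 𝕜 K) (hT : Convex 𝕜 T) :
    Convex 𝕜 {w : F | (K ∩ (w +ᵥ T)).Nonempty} := fun x hx y hy _ _ ha hb hab =>
  (hx.smul_set.add hy.smul_set).mono
    (smul_inter_vadd_add_smul_inter_vadd_subset hK hT ha hb hab x y)

end Pointwise

section SupportFunction

variable {n : ℕ} {A B S : Set (E n)}

lemma bddAbove_image_inner (hS : Bornology.IsBounded S) (u : E n) :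
    BddAbove ((fun x => ⟪x, u⟫_ℝ) '' S) := by
  obtain ⟨R, hR⟩ := hS.exists_norm_le
  refine ⟨R * ‖u‖, ?_⟩
  rintro _ ⟨x, hx, rfl⟩
  exact (real_inner_le_norm x u).trans (by gcongr; exact hR x hx)

lemma inner_le_suppFn (hS : Bornology.IsBounded S) {x : E n} (hx : x ∈ S) (u : E n) :
    ⟪x, u⟫_ℝ ≤ suppFn n S u :=
  le_csSup (bddAbove_image_inner hS u) (mem_image_of_mem _ hx)

lemma suppFn_mono (hA₀ : A.Nonempty) (hB : Bornology.IsBounded B) (hAB : A ⊆ B) (u : E n) :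
    suppFn n A u ≤ suppFn n B u :=
  csSup_le_csSup (bddAbove_image_inner hB u) (hA₀.image _) (image_mono hAB)

lemma suppFn_add (hA : Bornology.IsBounded A) (hB : Bornology.IsBounded B) (hA₀ : A.Nonempty)
    (hB₀ : B.Nonempty) (u : E n) : suppFn n (A + B) u = suppFn n A u + suppFn n B u := by
  have himage : (fun x => ⟪x, u⟫_ℝ) '' (A + B) =
      (fun x => ⟪x, u⟫_ℝ) '' A + (fun x => ⟪x, u⟫_ℝ) '' B :=
    image_image2_distrib fun x y => inner_add_left x y u
  rw [suppFn, himage]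
  exact csSup_add (hA₀.image _) (bddAbove_image_inner hA u) (hB₀.image _)
    (bddAbove_image_inner hB u)

lemma suppFn_smul {a : ℝ} (ha : 0 ≤ a) (S : Set (E n)) (u : E n) :
    suppFn n (a • S) u = a * suppFn n S u := by
  have himage : (fun x => ⟪x, u⟫_ℝ) '' (a • S) = a • (fun x => ⟪x, u⟫_ℝ) '' S :=
    image_smul_comm _ _ _ fun x => real_inner_smul_left x u a
  rw [suppFn, himage, Real.sSup_smul_of_nonneg ha, smul_eq_mul, suppFn]

lemma suppFn_zero (hS : S.Nonempty) : suppFn n S 0 = 0 := by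
  simp [suppFn, hS.image_const]

lemma exists_lipschitzWith_suppFn (hS : Bornology.IsBounded S) (hS₀ : S.Nonempty) :
    ∃ C, LipschitzWith C (suppFn n S) := by
  obtain ⟨R, hR, hSR⟩ := hS.exists_pos_norm_le
  refine ⟨⟨R, hR.le⟩, LipschitzWith.of_le_add_mul _ fun u v => csSup_le (hS₀.image _) ?_⟩
  rintro _ ⟨x, hx, rfl⟩
  calc ⟪x, u⟫_ℝ = ⟪x, v⟫_ℝ + ⟪x, u - v⟫_ℝ := by rw [inner_sub_right]; ring
    _ ≤ suppFn n S v + ‖x‖ * ‖u - v‖ :=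
      add_le_add (inner_le_suppFn hS hx v) (real_inner_le_norm x (u - v))
    _ ≤ suppFn n S v + R * dist u v := by
      rw [dist_eq_norm]
      gcongr
      exact hSR x hx

lemma memLp_suppFn_comp {α : Type*} [MeasurableSpace α] {μ : Measure α} {p : ENNReal}
    {f : α → E n} (hS : Bornology.IsBounded S) (hS₀ : S.Nonempty) (hf : MemLp f p μ) :
    MemLp (fun t => suppFn n S (f t)) p μ := by
  obtain ⟨C, hC⟩ := exists_lipschitzWith_suppFn hS hS₀
  exact hC.comp_memLp (suppFn_zero hS₀) hf

lemma intervalIntegrable_suppFn_comp {μ : Measure ℝ} {f : ℝ → E n} {a b : ℝ}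
    (hS : Bornology.IsBounded S) (hS₀ : S.Nonempty) (hf : IntervalIntegrable f μ a b) :
    IntervalIntegrable (fun t => suppFn n S (f t)) μ a b := by
  simp only [intervalIntegrable_iff, IntegrableOn, ← memLp_one_iff_integrable] at hf ⊢
  exact memLp_suppFn_comp hS hS₀ hf

end SupportFunction

section MeanSupport

variable {n : ℕ} {A B S : Set (E n)} {v : ℝ → E n}

/-- The velocities `ż` of the loops `z ∈ 𝓔_p`, over which the capacity (`p = 2`) is an infimum;
as the functional depends on `ż` only, the loop itself is forgotten. -/
def loopVelocities (n : ℕ) (p : ℝ) : Set (ℝ → E n) := {v | ∃ z, InE n p z v}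

/-- The functional `(1/2π) ∫₀^{2π} h_S(v(t)) dt` of a velocity `v`, which is minimized in the
definition of the capacity. -/
def meanSuppFn (n : ℕ) (S : Set (E n)) (v : ℝ → E n) : ℝ :=
  (1 / (2 * π)) * ∫ t in (0 : ℝ)..(2 * π), suppFn n S (v t)

lemma intervalIntegrable_of_mem_loopVelocities {p : ℝ} (hv : v ∈ loopVelocities n p) (a b : ℝ) :
    IntervalIntegrable v volume a b := by
  obtain ⟨z, -, hint, -⟩ := hv
  exact hint a b

lemma integral_eq_zero_of_mem_loopVelocities {p : ℝ} (hv : v ∈ loopVelocities n p) :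
    ∫ t in (0 : ℝ)..(2 * π), v t = 0 := by
  obtain ⟨z, hper, -, hz, -⟩ := hv
  have hclosed : z (2 * π) = z 0 := hper.eq
  exact left_eq_add.mp (hclosed.symm.trans (hz (2 * π)))

lemma meanSuppFn_mono (hv : IntervalIntegrable v volume 0 (2 * π)) (hA₀ : A.Nonempty)
    (hB : Bornology.IsBounded B) (hAB : A ⊆ B) : meanSuppFn n A v ≤ meanSuppFn n B v := by
  refine mul_le_mul_of_nonneg_left ?_ (by positivity)
  exact intervalIntegral.integral_mono_on (by positivity)
    (intervalIntegrable_suppFn_comp (hB.subset hAB) hA₀ hv)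
    (intervalIntegrable_suppFn_comp hB (hA₀.mono hAB) hv) fun t _ => suppFn_mono hA₀ hB hAB (v t)

lemma meanSuppFn_add (hv : IntervalIntegrable v volume 0 (2 * π)) (hA : Bornology.IsBounded A)
    (hB : Bornology.IsBounded B) (hA₀ : A.Nonempty) (hB₀ : B.Nonempty) :
    meanSuppFn n (A + B) v = meanSuppFn n A v + meanSuppFn n B v := by
  simp only [meanSuppFn, suppFn_add hA hB hA₀ hB₀]
  rw [intervalIntegral.integral_add (intervalIntegrable_suppFn_comp hA hA₀ hv)
    (intervalIntegrable_suppFn_comp hB hB₀ hv), mul_add]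

lemma meanSuppFn_smul {a : ℝ} (ha : 0 ≤ a) (S : Set (E n)) (v : ℝ → E n) :
    meanSuppFn n (a • S) v = a * meanSuppFn n S v := by
  simp only [meanSuppFn, suppFn_smul ha, intervalIntegral.integral_const_mul]
  ring

lemma meanSuppFn_singleton_eq_zero {p : ℝ} (hv : v ∈ loopVelocities n p) (s : E n) :
    meanSuppFn n {s} v = 0 := by
  have hint := intervalIntegrable_of_mem_loopVelocities hv 0 (2 * π)
  have hzero : ∫ t in (0 : ℝ)..(2 * π), ⟪s, v t⟫_ℝ = 0 := by
    simpa [integral_eq_zero_of_mem_loopVelocities hv] using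
      (innerSL ℝ s).intervalIntegral_comp_comm hint
  simp [meanSuppFn, suppFn, hzero]

lemma meanSuppFn_nonneg {p : ℝ} (hv : v ∈ loopVelocities n p) (hS : Bornology.IsBounded S)
    (hS₀ : S.Nonempty) : 0 ≤ meanSuppFn n S v := by
  obtain ⟨s, hs⟩ := hS₀
  calc 0 = meanSuppFn n {s} v := (meanSuppFn_singleton_eq_zero hv s).symm
    _ ≤ meanSuppFn n S v :=
      meanSuppFn_mono (intervalIntegrable_of_mem_loopVelocities hv _ _) (singleton_nonempty s) hS
        (singleton_subset_iff.mpr hs)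

lemma bddBelow_range_meanSuppFn (p : ℝ) (hS : Bornology.IsBounded S) (hS₀ : S.Nonempty) :
    BddBelow (range fun v : loopVelocities n p => meanSuppFn n S v) :=
  ⟨0, forall_mem_range.mpr fun v => meanSuppFn_nonneg v.2 hS hS₀⟩

end MeanSupport

section Capacity

variable {n : ℕ} {A B S : Set (E n)}

lemma capacity_eq_sq_iInf (n : ℕ) (S : Set (E n)) :
    capacity n S = (π * ⨅ v : loopVelocities n 2, meanSuppFn n S v) ^ 2 := by
  rw [capacity, iInf]
  congr 3
  ext r
  constructor
  · rintro ⟨z, v, hz, rfl⟩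
    exact ⟨⟨v, z, hz⟩, rfl⟩
  · rintro ⟨⟨v, z, hz⟩, rfl⟩
    exact ⟨z, v, hz, rfl⟩

lemma sqrt_capacity_eq_pi_mul_iInf (hS : Bornology.IsBounded S) (hS₀ : S.Nonempty) :
    √(capacity n S) = π * ⨅ v : loopVelocities n 2, meanSuppFn n S v := by
  rw [capacity_eq_sq_iInf]
  exact Real.sqrt_sq (mul_nonneg pi_pos.le (Real.iInf_nonneg fun v => meanSuppFn_nonneg v.2 hS hS₀))

lemma sqrt_capacity_mono (hA₀ : A.Nonempty) (hB : Bornology.IsBounded B) (hAB : A ⊆ B) :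
    √(capacity n A) ≤ √(capacity n B) := by
  rw [sqrt_capacity_eq_pi_mul_iInf (hB.subset hAB) hA₀,
    sqrt_capacity_eq_pi_mul_iInf hB (hA₀.mono hAB)]
  refine mul_le_mul_of_nonneg_left ?_ pi_pos.le
  exact ciInf_mono (bddBelow_range_meanSuppFn 2 (hB.subset hAB) hA₀) fun v =>
    meanSuppFn_mono (intervalIntegrable_of_mem_loopVelocities v.2 _ _) hA₀ hB hAB

lemma capacity_smul {a : ℝ} (ha : 0 ≤ a) (S : Set (E n)) :
    capacity n (a • S) = a ^ 2 * capacity n S := by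
  simp only [capacity_eq_sq_iInf, meanSuppFn_smul ha, ← Real.mul_iInf_of_nonneg ha]
  ring

lemma sqrt_capacity_smul {a : ℝ} (ha : 0 ≤ a) (S : Set (E n)) :
    √(capacity n (a • S)) = a * √(capacity n S) := by
  rw [capacity_smul ha, Real.sqrt_mul (sq_nonneg a), Real.sqrt_sq ha]

lemma sqrt_capacity_add_sqrt_capacity_le (hA : Bornology.IsBounded A) (hB : Bornology.IsBounded B)
    (hA₀ : A.Nonempty) (hB₀ : B.Nonempty) :
    √(capacity n A) + √(capacity n B) ≤ √(capacity n (A + B)) := by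
  rw [sqrt_capacity_eq_pi_mul_iInf hA hA₀, sqrt_capacity_eq_pi_mul_iInf hB hB₀,
    sqrt_capacity_eq_pi_mul_iInf (hA.add hB) (hA₀.add hB₀), ← mul_add]
  refine mul_le_mul_of_nonneg_left ?_ pi_pos.le
  -- In dimension `n = 0` there are no loops, and all three infima are the junk value `0`.
  obtain _ | _ := isEmpty_or_nonempty (loopVelocities n 2)
  · simp only [Real.iInf_of_isEmpty, add_zero, le_refl]
  refine le_ciInf fun v => ?_
  rw [meanSuppFn_add (intervalIntegrable_of_mem_loopVelocities v.2 _ _) hA hB hA₀ hB₀]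
  exact add_le_add (ciInf_le (bddBelow_range_meanSuppFn 2 hA hA₀) v)
    (ciInf_le (bddBelow_range_meanSuppFn 2 hB hB₀) v)

theorem sqrt_capacity_inter_translate_concave_general {K T : Set (E n)}
    (hKb : Bornology.IsBounded K) (hK : Convex ℝ K) (hT : Convex ℝ T) :
    ConcaveOn ℝ {w : E n | (K ∩ (w +ᵥ T)).Nonempty} fun w => √(capacity n (K ∩ (w +ᵥ T))) := by
  refine ⟨convex_setOf_inter_vadd_nonempty hK hT, fun x hx y hy a b ha hb hab => ?_⟩
  have hbdd (w : E n) : Bornology.IsBounded (K ∩ (w +ᵥ T)) := hKb.subset inter_subset_left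
  calc a * √(capacity n (K ∩ (x +ᵥ T))) + b * √(capacity n (K ∩ (y +ᵥ T)))
      = √(capacity n (a • (K ∩ (x +ᵥ T)))) + √(capacity n (b • (K ∩ (y +ᵥ T)))) := by
        rw [sqrt_capacity_smul ha, sqrt_capacity_smul hb]
    _ ≤ √(capacity n (a • (K ∩ (x +ᵥ T)) + b • (K ∩ (y +ᵥ T)))) :=
        sqrt_capacity_add_sqrt_capacity_le ((hbdd x).smul₀ a) ((hbdd y).smul₀ b)
          hx.smul_set hy.smul_set
    _ ≤ √(capacity n (K ∩ ((a • x + b • y) +ᵥ T))) :=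
        sqrt_capacity_mono (hx.smul_set.add hy.smul_set) (hbdd _)
          (smul_inter_vadd_add_smul_inter_vadd_subset hK hT ha hb hab x y)

end Capacity

/-- Concavity of `c^{1/2}` along translations of the intersecting body:
`λ·c(K ∩ (x+T))^{1/2} + (1−λ)·c(K ∩ (y+T))^{1/2} ≤ c(K ∩ (λx+(1−λ)y+T))^{1/2}`. -/
theorem sqrt_capacity_inter_translate_concave (n : ℕ) (K T : Set (E n))
    (hK : IsConvexBody n K) (hT : IsConvexBody n T)
    (x y : E n) (lam : ℝ) (hlam0 : 0 ≤ lam) (hlam1 : lam ≤ 1)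
    (hx : (interior (K ∩ ((fun t => x + t) '' T))).Nonempty)
    (hy : (interior (K ∩ ((fun t => y + t) '' T))).Nonempty) :
    lam * Real.sqrt (capacity n (K ∩ ((fun t => x + t) '' T))) +
        (1 - lam) * Real.sqrt (capacity n (K ∩ ((fun t => y + t) '' T))) ≤
      Real.sqrt (capacity n (K ∩ ((fun t => (lam • x + (1 - lam) • y) + t) '' T))) :=
  (sqrt_capacity_inter_translate_concave_general hK.1.isBounded hK.2.1 hT.2.1).2
    (hx.mono interior_subset) (hy.mono interior_subset) hlam0 (sub_nonneg.mpr hlam1)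
    (add_sub_cancel lam 1)
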